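/- arXiv:2009.14400 — 3 statements merged into one kernel-verified Lean document; each statement's English description precedes it below -/
import Mathlib

section
/- Let L be a number field that is Galois over ℚ with Galois group G, let τ : L ↪ ℂ be a complex embedding, and let c₀ ∈ G be the complex conjugation induced by τ. Then there is an isomorphism of ℚ[G]-modules (𝓞_L^× ⊗_ℤ ℚ) ⊕ ℚ ≅ ℚ[G/⟨c₀⟩], where ℚ carries the trivial G-action and ℚ[G/⟨c₀⟩] is the permutation representation of G on the left cosets of the subgroup ⟨c₀⟩ generated by c₀. Equivalently, 𝓞_L^× modulo torsion, tensored with ℚ, is isomorphic as a G-representation to Ind_{⟨c₀⟩}^G ℚ minus one copy of the trivial representation. -/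
open NumberField TensorProduct

/-- The natural action of an automorphism `σ ∈ Gal(L/ℚ)` of a number field `L` on the unit
group of its ring of integers, written additively and `ℤ`-linearly. -/
noncomputable def galUnitsLinear (L : Type*) [Field L] [NumberField L] (σ : L ≃ₐ[ℚ] L) :
    Additive (𝓞 L)ˣ →ₗ[ℤ] Additive (𝓞 L)ˣ :=
  (MonoidHom.toAdditive
    (Units.map ((galRestrict ℤ ℚ L (𝓞 L) σ : (𝓞 L) ≃ₐ[ℤ] (𝓞 L)) : (𝓞 L) →* (𝓞 L)))).toIntLinearMap

namespace GU
open NumberField.InfinitePlace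

variable {L : Type*} [Field L] [NumberField L]

lemma gal_mul (σ ρ : L ≃ₐ[ℚ] L) (x : Additive (𝓞 L)ˣ) :
    galUnitsLinear L (σ * ρ) x = galUnitsLinear L σ (galUnitsLinear L ρ x) := by
  apply Additive.toMul.injective
  ext
  simp [galUnitsLinear]

lemma gal_one (x : Additive (𝓞 L)ˣ) : galUnitsLinear L 1 x = x := by
  apply Additive.toMul.injective
  ext
  simp [galUnitsLinear]

/-- The logarithm of the absolute value of a unit at an infinite place. -/
noncomputable def logAt (w : InfinitePlace L) : Additive (𝓞 L)ˣ →ₗ[ℤ] ℝ :=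
  AddMonoidHom.toIntLinearMap
    { toFun := fun x => Real.log (w ((x.toMul : (𝓞 L)ˣ) : L))
      map_zero' := by simp
      map_add' := fun x y => by
        simp only [toMul_add, Units.val_mul, map_mul]
        rw [Real.log_mul (Units.pos_at_place _ w).ne' (Units.pos_at_place _ w).ne'] }

lemma logAt_apply (w : InfinitePlace L) (x : Additive (𝓞 L)ˣ) :
    logAt w x = Real.log (w ((x.toMul : (𝓞 L)ˣ) : L)) := rfl

lemma logAt_gal (w : InfinitePlace L) (σ : L ≃ₐ[ℚ] L) (x : Additive (𝓞 L)ˣ) :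
    logAt w (galUnitsLinear L σ x) = logAt (σ⁻¹ • w) x := by
  rw [logAt_apply, logAt_apply, InfinitePlace.smul_apply]
  congr 2
  exact algebraMap_galRestrict_apply ℤ σ _

lemma trans [IsGalois ℚ L] (w w' : InfinitePlace L) : ∃ σ : L ≃ₐ[ℚ] L, σ • w = w' :=
  exists_smul_eq_of_comap_eq (Subsingleton.elim _ _)

lemma stab (τ : L →+* ℂ) (c₀ : L ≃ₐ[ℚ] L)
    (hc₀ : ∀ x : L, τ (c₀ x) = (starRingEnd ℂ) (τ x)) :
    MulAction.stabilizer (L ≃ₐ[ℚ] L) (InfinitePlace.mk τ) = Subgroup.zpowers c₀ := by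
  have h : ComplexEmbedding.IsConj τ c₀ := RingHom.ext fun x => (hc₀ x).symm
  have h2 := h.coe_stabilizer_mk
  apply le_antisymm
  · intro g hg
    have : g ∈ ({1, c₀} : Set (L ≃ₐ[ℚ] L)) := h2 ▸ hg
    rcases this with rfl | rfl
    · exact one_mem _
    · exact Subgroup.mem_zpowers _
  · rw [Subgroup.zpowers_le, ← SetLike.mem_coe, h2]
    simp

lemma finrank_frac (R K M : Type*) [CommRing R] [Field K] [Algebra R K] [IsFractionRing R K]
    [AddCommGroup M] [Module R M] : Module.finrank K (K ⊗[R] M) = Module.finrank R M := by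
  have : IsLocalizedModule (nonZeroDivisors R) (TensorProduct.mk R K M 1) :=
    (isLocalizedModule_iff_isBaseChange (nonZeroDivisors R) K _).2
      (TensorProduct.isBaseChange R M K)
  rw [IsFractionRing.finrank_right_eq R K]
  exact IsLocalizedModule.finrank_eq (nonZeroDivisors R) (TensorProduct.mk R K M 1) le_rfl

lemma finrank_units : Module.finrank ℚ (ℚ ⊗[ℤ] Additive (𝓞 L)ˣ) = Units.rank L := by
  rw [← Units.finrank_eq]
  exact finrank_frac ℤ ℚ _

lemma card_quot [IsGalois ℚ L] (τ : L →+* ℂ) (c₀ : L ≃ₐ[ℚ] L)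
    (hc₀ : ∀ x : L, τ (c₀ x) = (starRingEnd ℂ) (τ x)) :
    Nat.card ((L ≃ₐ[ℚ] L) ⧸ Subgroup.zpowers c₀) = Units.rank L + 1 := by
  have : MulAction.IsPretransitive (L ≃ₐ[ℚ] L) (InfinitePlace L) := ⟨trans⟩
  rw [← stab τ c₀ hc₀, ← Subgroup.index, MulAction.index_stabilizer_of_transitive,
    Nat.card_eq_fintype_card, Units.rank]
  have := Fintype.card_pos (α := InfinitePlace L)
  omega

/-- Maximum principle. -/
lemma max_principle {Q : Type*} [Fintype Q] (a : Q → ℚ) (M : Q → Q → ℝ)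
    (hneg : ∀ p q, q ≠ p → M p q < 0) (hrow : ∀ p, ∑ q, M p q = 0)
    (hker : ∀ p, ∑ q, (a q : ℝ) * M p q = 0) (hsum : ∑ q, a q = 0) (q : Q) : a q = 0 := by
  have : Nonempty Q := ⟨q⟩
  obtain ⟨p, hp⟩ := Finite.exists_max a
  have h0 : ∑ q, ((a q : ℝ) - a p) * M p q = 0 := by
    simp only [sub_mul, Finset.sum_sub_distrib, hker, ← Finset.mul_sum, hrow]; simp
  have hnn : ∀ q ∈ Finset.univ, 0 ≤ ((a q : ℝ) - a p) * M p q := by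
    intro q _
    by_cases h : q = p
    · simp [h]
    · refine mul_nonneg_of_nonpos_of_nonpos ?_ (hneg p q h).le
      have : (a q : ℝ) ≤ a p := by exact_mod_cast hp q
      linarith
  have hconst : ∀ q, a q = a p := by
    intro q
    by_cases h : q = p
    · rw [h]
    · have := (Finset.sum_eq_zero_iff_of_nonneg hnn).1 h0 q (Finset.mem_univ _)
      rcases mul_eq_zero.1 this with h1 | h1
      · exact_mod_cast sub_eq_zero.1 h1
      · exact absurd h1 (hneg p q h).ne
  simp only [hconst, Finset.sum_const, nsmul_eq_mul, mul_eq_zero] at hsum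
  rw [hconst q]
  refine hsum.resolve_left ?_
  simp

end GU

/-- Let `L` be a number field, Galois over `ℚ` with Galois group `G`, let
`τ : L ↪ ℂ` be a complex embedding and `c₀ ∈ G` the complex conjugation induced by `τ`.
Then there is an isomorphism of `ℚ[G]`-modules `(𝓞_L^× ⊗_ℤ ℚ) ⊕ ℚ ≅ ℚ[G/⟨c₀⟩]`, where `ℚ`
carries the trivial `G`-action and `ℚ[G/⟨c₀⟩]` is the permutation representation of `G` on
the left cosets of `⟨c₀⟩`; i.e. there is a `ℚ`-linear equivalence intertwining the `G`-actions
(`G` acting on the left factor through its action on units, trivially on the `ℚ`-summand, and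
by translation of cosets on the right-hand side). -/
theorem units_tensor_rat_iso_permutation_rep
    (L : Type*) [Field L] [NumberField L] [IsGalois ℚ L]
    (τ : L →+* ℂ) (c₀ : L ≃ₐ[ℚ] L)
    (hc₀ : ∀ x : L, τ (c₀ x) = (starRingEnd ℂ) (τ x)) :
    ∃ e : ((ℚ ⊗[ℤ] Additive (𝓞 L)ˣ) × ℚ) ≃ₗ[ℚ]
        (((L ≃ₐ[ℚ] L) ⧸ Subgroup.zpowers c₀) →₀ ℚ),
      ∀ (σ : L ≃ₐ[ℚ] L) (x : (ℚ ⊗[ℤ] Additive (𝓞 L)ˣ) × ℚ),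
        e (LinearMap.baseChange ℚ (galUnitsLinear L σ) x.1, x.2) =
          Finsupp.mapDomain (fun y : (L ≃ₐ[ℚ] L) ⧸ Subgroup.zpowers c₀ => σ • y) (e x) := by
  classical
  have hstab := GU.stab τ c₀ hc₀
  set w₁ := InfinitePlace.mk τ with hw₁
  have hc1 : c₀ • w₁ = w₁ := by
    have : c₀ ∈ MulAction.stabilizer (L ≃ₐ[ℚ] L) w₁ := hstab ▸ Subgroup.mem_zpowers c₀
    exact this
  obtain ⟨u₀, hu₀⟩ := Units.dirichletUnitTheorem.exists_unit L w₁
  have hcc : c₀ * c₀ = 1 := by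
    ext x
    apply τ.injective
    simp [AlgEquiv.mul_apply, hc₀]
  let u : Additive (𝓞 L)ˣ := Additive.ofMul u₀ + galUnitsLinear L c₀ (Additive.ofMul u₀)
  have hu : galUnitsLinear L c₀ u = u := by
    simp only [u, map_add, ← GU.gal_mul, hcc, GU.gal_one]
    rw [add_comm]
  have hneg : ∀ w, w ≠ w₁ → GU.logAt w u < 0 := by
    intro w hw
    simp only [u, map_add, GU.logAt_gal]
    refine add_neg (hu₀ w hw) (hu₀ _ fun h => hw ?_)
    rw [inv_smul_eq_iff, hc1] at h
    exact h
  let Q := (L ≃ₐ[ℚ] L) ⧸ Subgroup.zpowers c₀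
  have hz : ∀ g ∈ Subgroup.zpowers c₀, galUnitsLinear L g u = u := by
    let S : Subgroup (L ≃ₐ[ℚ] L) :=
      { carrier := {g | galUnitsLinear L g u = u}
        one_mem' := GU.gal_one u
        mul_mem' := fun {a b} (ha : _ = _) (hb : _ = _) => by
          change galUnitsLinear L (a * b) u = u
          rw [GU.gal_mul, hb, ha]
        inv_mem' := fun {a} (ha : _ = _) => by
          change galUnitsLinear L a⁻¹ u = u
          conv_lhs => rw [← ha]
          rw [← GU.gal_mul, inv_mul_cancel, GU.gal_one] }
    have : Subgroup.zpowers c₀ ≤ S := by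
      rw [Subgroup.zpowers_le]; exact hu
    exact this
  let f : Q → Additive (𝓞 L)ˣ := Quotient.lift (fun g => galUnitsLinear L g u) (by
    intro a b hab
    have h := hz _ (QuotientGroup.leftRel_apply.1 hab)
    change galUnitsLinear L a u = galUnitsLinear L b u
    conv_lhs => rw [← h]
    rw [← GU.gal_mul, mul_inv_cancel_left])
  have hfmk : ∀ g : L ≃ₐ[ℚ] L, f (QuotientGroup.mk g) = galUnitsLinear L g u := fun g => rfl
  have hf : ∀ (σ : L ≃ₐ[ℚ] L) (q : Q), galUnitsLinear L σ (f q) = f (σ • q) := by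
    intro σ q
    induction q using QuotientGroup.induction_on with
    | H g =>
      rw [hfmk, ← GU.gal_mul]
      rfl
  let _ : Fintype Q := Fintype.ofFinite Q
  have hrow : ∀ w, ∑ q, GU.logAt w (f q) = 0 := by
    set v := ∑ q, f q with hv
    have hinv : ∀ σ, galUnitsLinear L σ v = v := by
      intro σ
      rw [hv, map_sum]
      simp only [hf]
      exact Equiv.sum_comp (MulAction.toPerm σ : Equiv.Perm Q) f
    have hw : ∀ w, GU.logAt w v = GU.logAt w₁ v := by
      intro w
      obtain ⟨σ, hσ⟩ := GU.trans w w₁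
      rw [← hσ, ← inv_inv σ, ← GU.logAt_gal, hinv]
    have hs : ∑ w : InfinitePlace L, w.mult * GU.logAt w v = 0 :=
      Units.sum_mult_mul_log (Additive.toMul v)
    simp only [hw] at hs
    rw [← Finset.sum_mul, ← Nat.cast_sum, InfinitePlace.sum_mult_eq] at hs
    intro w
    rw [← map_sum, ← hv, hw]
    refine (mul_eq_zero.1 hs).resolve_left ?_
    exact_mod_cast (Module.finrank_pos (R := ℚ) (M := L)).ne'
  let φ : (Q →₀ ℚ) →ₗ[ℚ] (ℚ ⊗[ℤ] Additive (𝓞 L)ˣ) × ℚ :=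
    Finsupp.linearCombination ℚ (fun q => ((1 : ℚ) ⊗ₜ[ℤ] f q, (1 : ℚ)))
  have hφs : ∀ q : Q, φ (Finsupp.single q 1) = ((1 : ℚ) ⊗ₜ[ℤ] f q, (1 : ℚ)) := by
    intro q
    simp [φ]
  have hinj : Function.Injective φ := by
    rw [injective_iff_map_eq_zero]
    intro a ha
    have ha' : ∑ q, a q • (((1 : ℚ) ⊗ₜ[ℤ] f q, (1 : ℚ)) : (ℚ ⊗[ℤ] Additive (𝓞 L)ˣ) × ℚ) = 0 := by
      rw [← ha]
      simp only [φ, Finsupp.linearCombination_apply]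
      rw [Finsupp.sum_fintype _ _ (by simp)]
    have h1 : ∑ q, a q • ((1 : ℚ) ⊗ₜ[ℤ] f q) = 0 := by
      simpa [Prod.fst_sum] using congrArg Prod.fst ha'
    have h2 : ∑ q, a q = 0 := by
      simpa [Prod.snd_sum] using congrArg Prod.snd ha'
    ext q
    refine GU.max_principle (fun q => a q)
      (fun p q => GU.logAt (p.out • w₁) (f q)) ?_ (fun p => hrow _) ?_ h2 q
    · intro p q hpq
      change GU.logAt (p.out • w₁) (f q) < 0
      rw [← QuotientGroup.out_eq' q, hfmk, GU.logAt_gal]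
      apply hneg
      intro h
      apply hpq
      rw [← mul_smul] at h
      have h : (Quotient.out q)⁻¹ * Quotient.out p ∈ MulAction.stabilizer (L ≃ₐ[ℚ] L) w₁ := h
      rw [hstab, ← QuotientGroup.eq] at h
      rw [← QuotientGroup.out_eq' q, ← QuotientGroup.out_eq' p]
      exact h
    · intro p
      have := congrArg (LinearMap.liftBaseChange ℚ (GU.logAt (p.out • w₁))) h1
      simpa [map_sum, Rat.smul_def] using this
  have hfin : Module.finrank ℚ (Q →₀ ℚ) =
      Module.finrank ℚ ((ℚ ⊗[ℤ] Additive (𝓞 L)ˣ) × ℚ) := by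
    rw [Module.finrank_prod, GU.finrank_units, Module.finrank_self,
      Module.finrank_finsupp_self, ← Nat.card_eq_fintype_card]
    exact GU.card_quot τ c₀ hc₀
  let E := LinearEquiv.ofInjectiveOfFinrankEq φ hinj hfin
  have hE : ∀ a, E a = φ a := fun a => rfl
  refine ⟨E.symm, fun σ x => ?_⟩
  obtain ⟨a, rfl⟩ := E.surjective x
  rw [LinearEquiv.symm_apply_apply, LinearEquiv.symm_apply_eq, hE, hE]
  induction a using Finsupp.induction_linear with
  | zero => simp
  | add a b ha hb =>
    rw [Finsupp.mapDomain_add, map_add, map_add, ← ha, ← hb]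
    simp
  | single q r =>
    rw [Finsupp.mapDomain_single, ← mul_one r, ← smul_eq_mul, ← Finsupp.smul_single,
      ← Finsupp.smul_single, map_smul, map_smul, hφs, hφs, ← hf]
    simp
end

section
/- Let L be a number field that is Galois over ℚ with Galois group G, let τ : L ↪ ℂ be a complex embedding, and let c₀ ∈ G be the complex conjugation induced by τ. Let E be a field of characteristic 0 and let M be a finite-dimensional E-linear representation of G containing no copy of the trivial representation (equivalently, M^G = 0). Then dim_E Hom_{E[G]}(M, 𝓞_L^× ⊗_ℤ E) = dim_E M^{⟨c₀⟩}, the dimension of the subspace of M fixed by c₀. -/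
open NumberField TensorProduct

/-- The induced (`E`-linear) Galois action on `𝓞_L^× ⊗_ℤ E`. -/
noncomputable def galUnitsTensor (L : Type*) [Field L] [NumberField L]
    (E : Type*) [Field E] (σ : L ≃ₐ[ℚ] L) :
    (E ⊗[ℤ] Additive (𝓞 L)ˣ) →ₗ[E] (E ⊗[ℤ] Additive (𝓞 L)ˣ) :=
  LinearMap.baseChange E (galUnitsLinear L σ)

/-- The submodule of `G`-equivariant `E`-linear maps between two spaces equipped with
(`E`-linear) `G`-actions `ρ` and `ν`. -/
def equivariantHoms {E G M N : Type*} [CommSemiring E]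
    [AddCommMonoid M] [Module E M] [AddCommMonoid N] [Module E N]
    (ρ : G → M →ₗ[E] M) (ν : G → N →ₗ[E] N) : Submodule E (M →ₗ[E] N) where
  carrier := {φ | ∀ g : G, ∀ m : M, φ (ρ g m) = ν g (φ m)}
  add_mem' := by intro a b ha hb g m; simp [ha g m, hb g m]
  zero_mem' := by intro g m; simp
  smul_mem' := by intro c φ hφ g m; simp [hφ g m]

section helpers
open Module

theorem aux_tensor_torsion {A : Type*} [AddCommGroup A] (E : Type*) [Field E] [CharZero E]
    (a : A) (n : ℤ) (hn : n ≠ 0) (h : n • a = 0) (e : E) : e ⊗ₜ[ℤ] a = 0 := by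
  have hn' : (n : E) ≠ 0 := Int.cast_ne_zero.mpr hn
  have : e = n • ((n : E)⁻¹ * e) := by
    rw [zsmul_eq_mul, mul_inv_cancel_left₀ hn']
  rw [this, TensorProduct.smul_tmul, h, TensorProduct.tmul_zero]

theorem aux_comp_id {A A' : Type*} [AddCommGroup A] [AddCommGroup A']
    (q : A →ₗ[ℤ] A') (s : A' →ₗ[ℤ] A) (hqs : q ∘ₗ s = LinearMap.id)
    (hker : ∀ a, q a = 0 → ∃ n : ℤ, n ≠ 0 ∧ n • a = 0)
    (E : Type*) [Field E] [CharZero E] :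
    (s.baseChange E) ∘ₗ (q.baseChange E) = LinearMap.id := by
  apply TensorProduct.AlgebraTensorModule.ext
  intro e a
  simp only [LinearMap.comp_apply, LinearMap.baseChange_tmul, LinearMap.id_apply]
  obtain ⟨n, hn, h⟩ := hker (s (q a) - a) (by
    have := LinearMap.congr_fun hqs (q a)
    simpa [sub_eq_zero] using this)
  have := aux_tensor_torsion E _ n hn h e
  rwa [TensorProduct.tmul_sub, sub_eq_zero] at this

theorem aux_comp_id' {A A' : Type*} [AddCommGroup A] [AddCommGroup A']
    (q : A →ₗ[ℤ] A') (s : A' →ₗ[ℤ] A) (hqs : q ∘ₗ s = LinearMap.id)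
    (E : Type*) [Field E] :
    (q.baseChange E) ∘ₗ (s.baseChange E) = LinearMap.id := by
  rw [← LinearMap.baseChange_comp, hqs, LinearMap.baseChange_id]

theorem aux_finrank {A A' : Type*} [AddCommGroup A] [AddCommGroup A'] [Module.Free ℤ A']
    [Module.Finite ℤ A']
    (q : A →ₗ[ℤ] A') (s : A' →ₗ[ℤ] A) (hqs : q ∘ₗ s = LinearMap.id)
    (hker : ∀ a, q a = 0 → ∃ n : ℤ, n ≠ 0 ∧ n • a = 0)
    (E : Type*) [Field E] [CharZero E] :
    finrank E (E ⊗[ℤ] A) = finrank ℤ A' := by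
  rw [← Module.finrank_baseChange (R := E) (S := ℤ) (M' := A')]
  exact (LinearEquiv.ofLinearMap (q.baseChange E) (s.baseChange E) (aux_comp_id' q s hqs E)
    (aux_comp_id q s hqs hker E)).finrank_eq

theorem aux_trace {A A' : Type*} [AddCommGroup A] [AddCommGroup A'] [Module.Free ℤ A']
    [Module.Finite ℤ A'] [Module.Finite ℤ A]
    (q : A →ₗ[ℤ] A') (s : A' →ₗ[ℤ] A) (hqs : q ∘ₗ s = LinearMap.id)
    (hker : ∀ a, q a = 0 → ∃ n : ℤ, n ≠ 0 ∧ n • a = 0)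
    (f : A →ₗ[ℤ] A)
    (E : Type*) [Field E] [CharZero E] :
    LinearMap.trace E (E ⊗[ℤ] A) (f.baseChange E) =
      ((LinearMap.trace ℤ A' (q ∘ₗ f ∘ₗ s) : ℤ) : E) := by
  have h1 := LinearMap.trace_baseChange (q ∘ₗ f ∘ₗ s) E
  rw [eq_intCast] at h1
  rw [← h1, LinearMap.baseChange_comp, LinearMap.baseChange_comp, LinearMap.trace_comp_comm',
    LinearMap.comp_assoc, aux_comp_id q s hqs hker E, LinearMap.comp_id]

theorem aux_finite (L : Type*) [Field L] [NumberField L] :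
    Module.Finite ℤ (Units.unitLattice L) := by
  classical
  exact ZLattice.module_finite ℝ _

theorem aux_free (L : Type*) [Field L] [NumberField L] :
    Module.Free ℤ (Units.unitLattice L) := by
  classical
  exact ZLattice.module_free ℝ _

theorem aux_section (L : Type*) [Field L] [NumberField L] :
    ∃ (q : Additive (𝓞 L)ˣ →ₗ[ℤ] Units.unitLattice L)
      (s : Units.unitLattice L →ₗ[ℤ] Additive (𝓞 L)ˣ),
      q ∘ₗ s = LinearMap.id ∧ ∀ a, q a = 0 → ∃ n : ℤ, n ≠ 0 ∧ n • a = 0 := by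
  have : Module.Free ℤ (Units.unitLattice L) := aux_free L
  let q : Additive (𝓞 L)ˣ →ₗ[ℤ] Units.unitLattice L :=
    LinearMap.codRestrict (Units.unitLattice L) (Units.logEmbedding L).toIntLinearMap
      (fun x => Submodule.mem_map_of_mem trivial)
  have hq : Function.Surjective q := by
    rintro ⟨_, ⟨x, -, rfl⟩⟩
    exact ⟨x, rfl⟩
  obtain ⟨s, hs⟩ := Module.projective_lifting_property q LinearMap.id hq
  refine ⟨q, s, hs, fun a ha => ?_⟩
  have h0 : Units.logEmbedding L (Additive.ofMul a.toMul) = 0 := congrArg Subtype.val ha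
  have h1 : a.toMul ∈ Units.torsion L := Units.dirichletUnitTheorem.logEmbedding_eq_zero_iff.mp h0
  have h2 : IsOfFinOrder a.toMul := h1
  obtain ⟨n, hn, h⟩ := isOfFinOrder_iff_pow_eq_one.mp h2
  refine ⟨n, by exact_mod_cast hn.ne', ?_⟩
  rw [natCast_zsmul]
  exact h

theorem aux_trace_funLeft {P : Type*} [Fintype P] [DecidableEq P] (E : Type*) [Field E]
    (f : P → P) :
    LinearMap.trace E (P → E) (LinearMap.funLeft E E f) = ∑ w, if f w = w then 1 else 0 := by
  rw [LinearMap.trace_eq_matrix_trace E (Pi.basisFun E P), Matrix.trace]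
  refine Finset.sum_congr rfl fun w _ => ?_
  simp [LinearMap.toMatrix_apply, LinearMap.funLeft_apply, Pi.single_apply]

/-- full log map -/
noncomputable def auxLog (L : Type*) [Field L] [NumberField L] :
    Additive (𝓞 L)ˣ →ₗ[ℤ] (InfinitePlace L → ℝ) :=
  AddMonoidHom.toIntLinearMap
  { toFun := fun x w ↦ InfinitePlace.mult w * Real.log (w (x.toMul : L))
    map_zero' := by ext; simp
    map_add' := fun _ _ ↦ by ext; simp [Real.log_mul, mul_add] }

theorem auxLog_apply (L : Type*) [Field L] [NumberField L] (x : Additive (𝓞 L)ˣ)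
    (w : InfinitePlace L) :
    auxLog L x w = InfinitePlace.mult w * Real.log (w (x.toMul : L)) := rfl

theorem aux_mult_smul (L : Type*) [Field L] [NumberField L] (σ : L ≃ₐ[ℚ] L)
    (w : InfinitePlace L) : (σ • w).mult = w.mult := by
  unfold InfinitePlace.mult
  by_cases h : w.IsReal
  · rw [if_pos h, if_pos (InfinitePlace.isReal_smul_iff.mpr h)]
  · rw [if_neg h, if_neg (fun h' => h (InfinitePlace.isReal_smul_iff.mp h'))]

theorem auxLog_gal (L : Type*) [Field L] [NumberField L] (σ : L ≃ₐ[ℚ] L) (x : Additive (𝓞 L)ˣ)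
    (w : InfinitePlace L) :
    auxLog L (galUnitsLinear L σ x) w = auxLog L x (σ⁻¹ • w) := by
  rw [auxLog_apply, auxLog_apply, aux_mult_smul, InfinitePlace.smul_apply]
  have : (((galUnitsLinear L σ x).toMul : (𝓞 L)ˣ) : L) = σ (x.toMul : L) :=
    algebraMap_galRestrict_apply ℤ σ (x.toMul : 𝓞 L)
  rw [this]
  rfl

noncomputable def auxLogR (L : Type*) [Field L] [NumberField L] :
    (ℝ ⊗[ℤ] Additive (𝓞 L)ˣ) →ₗ[ℝ] (InfinitePlace L → ℝ) :=
  TensorProduct.AlgebraTensorModule.lift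
    ((LinearMap.lsmul ℝ ((Additive (𝓞 L)ˣ) →ₗ[ℤ] (InfinitePlace L → ℝ))).flip (auxLog L))

theorem auxLogR_tmul (L : Type*) [Field L] [NumberField L] (r : ℝ) (x : Additive (𝓞 L)ˣ) :
    auxLogR L (r ⊗ₜ x) = r • auxLog L x := rfl

theorem auxLogR_gal (L : Type*) [Field L] [NumberField L] (σ : L ≃ₐ[ℚ] L)
    (x : ℝ ⊗[ℤ] Additive (𝓞 L)ˣ) :
    auxLogR L (galUnitsTensor L ℝ σ x) =
      LinearMap.funLeft ℝ ℝ (fun w : InfinitePlace L => σ⁻¹ • w) (auxLogR L x) := by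
  induction x with
  | zero => simp
  | add x y hx hy => simp only [map_add, hx, hy]
  | tmul r x =>
    rw [galUnitsTensor, LinearMap.baseChange_tmul, auxLogR_tmul, auxLogR_tmul]
    ext w
    simp [LinearMap.funLeft_apply, auxLog_gal]

theorem auxLogR_sum (L : Type*) [Field L] [NumberField L]
    (x : ℝ ⊗[ℤ] Additive (𝓞 L)ˣ) : ∑ w, auxLogR L x w = 0 := by
  induction x with
  | zero => simp
  | add x y hx hy => simp only [map_add, Pi.add_apply, Finset.sum_add_distrib, hx, hy, add_zero]
  | tmul r x =>
    simp only [auxLogR_tmul, Pi.smul_apply, ← Finset.smul_sum, auxLog_apply]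
    rw [Units.sum_mult_mul_log, smul_zero]

theorem auxLogR_surj (L : Type*) [Field L] [NumberField L] (f : InfinitePlace L → ℝ)
    (hf : ∑ w, f w = 0) : ∃ x, auxLogR L x = f := by
  classical
  let p : (InfinitePlace L → ℝ) →ₗ[ℝ] Units.dirichletUnitTheorem.logSpace L :=
    LinearMap.funLeft ℝ ℝ Subtype.val
  have hr : LinearMap.range (p ∘ₗ auxLogR L) = ⊤ := by
    rw [eq_top_iff, ← Units.dirichletUnitTheorem.unitLattice_span_eq_top, Submodule.span_le]
    rintro _ ⟨x, -, rfl⟩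
    refine ⟨1 ⊗ₜ x, ?_⟩
    rw [LinearMap.comp_apply, auxLogR_tmul, one_smul]
    rfl
  obtain ⟨x, hx⟩ := LinearMap.range_eq_top.mp hr (p f)
  refine ⟨x, ?_⟩
  have h1 : ∀ w, w ≠ Units.dirichletUnitTheorem.w₀ → auxLogR L x w = f w := fun w hw =>
    congrFun hx ⟨w, hw⟩
  have h2 := auxLogR_sum L x
  rw [Fintype.sum_eq_add_sum_subtype_ne _ Units.dirichletUnitTheorem.w₀] at h2 hf
  have h3 : ∑ w : {w : InfinitePlace L // w ≠ Units.dirichletUnitTheorem.w₀}, auxLogR L x w.1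
      = ∑ w : {w : InfinitePlace L // w ≠ Units.dirichletUnitTheorem.w₀}, f w.1 :=
    Finset.sum_congr rfl fun w _ => h1 w.1 w.2
  ext w
  by_cases hw : w = Units.dirichletUnitTheorem.w₀
  · subst hw
    linarith
  · exact h1 w hw

theorem aux_trace_real (L : Type*) [Field L] [NumberField L] [DecidableEq (InfinitePlace L)]
    (σ : L ≃ₐ[ℚ] L) :
    LinearMap.trace ℝ _ (galUnitsTensor L ℝ σ) + 1 =
      ∑ w : InfinitePlace L, if σ⁻¹ • w = w then 1 else 0 := by
  have : Module.Free ℤ (Units.unitLattice L) := aux_free L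
  have : Module.Finite ℤ (Units.unitLattice L) := aux_finite L
  obtain ⟨q, s, hqs, hker⟩ := aux_section L
  let F : ((ℝ ⊗[ℤ] Additive (𝓞 L)ˣ) × ℝ) →ₗ[ℝ] (InfinitePlace L → ℝ) :=
    (auxLogR L).coprod (LinearMap.toSpanSingleton ℝ _ (fun _ => 1))
  have hFapp : ∀ x t, F (x, t) = auxLogR L x + fun _ => t := by
    intro x t
    ext w
    simp [F]
  have hcard : (Fintype.card (InfinitePlace L) : ℝ) ≠ 0 := by
    exact_mod_cast Fintype.card_ne_zero
  have hsurj : Function.Surjective F := by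
    intro f
    obtain ⟨x, hx⟩ := auxLogR_surj L
      (fun w => f w - (∑ v, f v) / Fintype.card (InfinitePlace L)) (by
        rw [Finset.sum_sub_distrib, Finset.sum_const, Finset.card_univ, nsmul_eq_mul,
          mul_div_cancel₀ _ hcard, sub_self])
    refine ⟨(x, (∑ v, f v) / Fintype.card (InfinitePlace L)), ?_⟩
    rw [hFapp, hx]
    ext w
    simp
  have hdim : finrank ℝ ((ℝ ⊗[ℤ] Additive (𝓞 L)ˣ) × ℝ) = finrank ℝ (InfinitePlace L → ℝ) := by
    rw [finrank_prod, aux_finrank q s hqs hker, Units.unitLattice_rank, finrank_self,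
      finrank_fintype_fun_eq_card, Units.rank]
    have : 0 < Fintype.card (InfinitePlace L) := Fintype.card_pos
    omega
  have hinj : Function.Injective F :=
    (LinearMap.injective_iff_surjective_of_finrank_eq_finrank hdim).mpr hsurj
  let e := LinearEquiv.ofBijective F ⟨hinj, hsurj⟩
  have h1 := LinearMap.trace_conj' ((galUnitsTensor L ℝ σ).prodMap LinearMap.id) e
  have h2 : e.conj ((galUnitsTensor L ℝ σ).prodMap LinearMap.id) =
      LinearMap.funLeft ℝ ℝ (fun w : InfinitePlace L => σ⁻¹ • w) := by
    apply LinearMap.ext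
    intro f
    obtain ⟨⟨x, t⟩, rfl⟩ := e.surjective f
    rw [LinearEquiv.conj_apply_apply, LinearEquiv.symm_apply_apply]
    change F _ = LinearMap.funLeft ℝ ℝ _ (F _)
    rw [LinearMap.prodMap_apply, hFapp, hFapp, auxLogR_gal]
    rfl
  rw [h2, aux_trace_funLeft, LinearMap.trace_prodMap', LinearMap.trace_id, finrank_self] at h1
  rw [h1]
  simp

theorem aux_trace_E (L : Type*) [Field L] [NumberField L] [DecidableEq (InfinitePlace L)]
    (E : Type*) [Field E] [CharZero E]
    (σ : L ≃ₐ[ℚ] L) :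
    LinearMap.trace E _ (galUnitsTensor L E σ) + 1 =
      ∑ w : InfinitePlace L, if σ⁻¹ • w = w then 1 else 0 := by
  have : Module.Free ℤ (Units.unitLattice L) := aux_free L
  have : Module.Finite ℤ (Units.unitLattice L) := aux_finite L
  obtain ⟨q, s, hqs, hker⟩ := aux_section L
  have h := aux_trace_real L σ
  rw [galUnitsTensor, aux_trace q s hqs hker] at h ⊢
  generalize LinearMap.trace ℤ _ (q ∘ₗ galUnitsLinear L σ ∘ₗ s) = n at h ⊢
  have h' : n + 1 = ∑ w : InfinitePlace L, if σ⁻¹ • w = w then (1 : ℤ) else 0 := by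
    have : ((n + 1 : ℤ) : ℝ) =
      ((∑ w : InfinitePlace L, if σ⁻¹ • w = w then (1 : ℤ) else 0 : ℤ) : ℝ) := by
      push_cast
      exact h
    exact_mod_cast this
  have := congrArg (Int.cast : ℤ → E) h'
  push_cast at this
  exact this

/-- the representation on units -/
noncomputable def auxRep (L : Type*) [Field L] [NumberField L] (E : Type*) [Field E] :
    Representation E (L ≃ₐ[ℚ] L) (E ⊗[ℤ] Additive (𝓞 L)ˣ) where
  toFun σ := galUnitsTensor L E σ
  map_one' := by
    have : galUnitsLinear L (1 : L ≃ₐ[ℚ] L) = LinearMap.id := by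
      ext x
      simp [galUnitsLinear]
    rw [galUnitsTensor, this, LinearMap.baseChange_id]
    rfl
  map_mul' σ σ' := by
    have : galUnitsLinear L (σ * σ') = galUnitsLinear L σ ∘ₗ galUnitsLinear L σ' := by
      ext x
      simp [galUnitsLinear]
    rw [galUnitsTensor, this, LinearMap.baseChange_comp]
    rfl

theorem aux_equivariant (L : Type*) [Field L] [NumberField L]
    (E : Type*) [Field E] [CharZero E]
    (M : Type*) [AddCommGroup M] [Module E M] [FiniteDimensional E M]
    (ρ : Representation E (L ≃ₐ[ℚ] L) M) :
    equivariantHoms (fun σ : L ≃ₐ[ℚ] L => ρ σ) (fun σ : L ≃ₐ[ℚ] L => galUnitsTensor L E σ) =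
      (Representation.linHom ρ (auxRep L E)).invariants := by
  ext f
  have := Representation.mem_linHom_invariants_iff_isIntertwining (ρ := ρ) (σ := auxRep L E) f
  refine Iff.trans ?_ this.symm
  exact ⟨fun h => ⟨h⟩, fun h => h.1⟩

/-- Averaging over a transitive action. -/
theorem aux_average {G P E M : Type*} [Group G] [Fintype G] [Fintype P] [DecidableEq P]
    [MulAction G P]
    [Field E] [CharZero E] [AddCommGroup M] [Module E M] [FiniteDimensional E M]
    (ρ : Representation E G M) (w : P) (htr : ∀ w', ∃ g : G, g • w = w') :
    (Nat.card G : E)⁻¹ * ∑ g : G, ρ.character g⁻¹ * ∑ v : P, (if g⁻¹ • v = v then 1 else 0) =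
      finrank E (Representation.invariants (ρ.comp (MulAction.stabilizer G w).subtype)) := by
  classical
  have inst : Invertible (Nat.card (MulAction.stabilizer G w) : E) :=
    invertibleOfNonzero (by exact_mod_cast Nat.card_pos.ne')
  have h0 := Representation.card_inv_mul_sum_char_eq_finrank
    (ρ := (ρ.comp (MulAction.stabilizer G w).subtype : Representation E _ M))
  rw [← h0]
  have hS : ∑ g : MulAction.stabilizer G w,
      Representation.character (ρ.comp (MulAction.stabilizer G w).subtype) g =
      ∑ g : G, if g • w = w then ρ.character g else 0 := by
    rw [← Finset.sum_filter]
    exact (Finset.sum_subtype (p := fun g => g ∈ MulAction.stabilizer G w)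
      (Finset.univ.filter fun g : G => g • w = w)
      (by simp [MulAction.mem_stabilizer_iff]) (fun g => ρ.character g)).symm
  rw [hS]
  have hv : ∀ v : P, ∑ g : G, ρ.character g⁻¹ * (if g⁻¹ • v = v then 1 else 0) =
      ∑ g : G, if g • w = w then ρ.character g else 0 := by
    intro v
    obtain ⟨x, rfl⟩ := htr v
    rw [← Equiv.sum_comp (Equiv.inv G)]
    rw [← Equiv.sum_comp (MulAut.conj x).toEquiv]
    refine Finset.sum_congr rfl fun g _ => ?_
    have : (x * g * x⁻¹) • x • w = x • w ↔ g • w = w := by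
      rw [← mul_smul, inv_mul_cancel_right, mul_smul, smul_left_cancel_iff]
    simp only [Equiv.inv_apply, inv_inv, MulEquiv.toEquiv_eq_coe, EquivLike.coe_coe,
      MulAut.conj_apply, this, Representation.char_conj]
    simp
  have hcomm : ∑ g : G, ρ.character g⁻¹ * ∑ v : P, (if g⁻¹ • v = v then 1 else 0) =
      ∑ v : P, ∑ g : G, ρ.character g⁻¹ * (if g⁻¹ • v = v then 1 else 0) := by
    rw [Finset.sum_comm]
    exact Finset.sum_congr rfl fun g _ => Finset.mul_sum _ _ _
  rw [hcomm, Finset.sum_congr rfl fun v _ => hv v, Finset.sum_const, Finset.card_univ, nsmul_eq_mul, ← mul_assoc]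
  congr 1
  have hc : Nat.card G = Fintype.card P * Nat.card (MulAction.stabilizer G w) := by
    have h1 := Subgroup.index_mul_card (MulAction.stabilizer G w)
    have h2 : MulAction.orbit G w = Set.univ := Set.eq_univ_of_forall htr
    rw [MulAction.index_stabilizer, h2, Set.ncard_univ, Nat.card_eq_fintype_card] at h1
    exact h1.symm
  have hP : (Fintype.card P : E) ≠ 0 := by
    have : Nonempty P := ⟨w⟩
    exact_mod_cast Fintype.card_ne_zero
  have hH : (Nat.card (MulAction.stabilizer G w) : E) ≠ 0 := by
    exact_mod_cast Nat.card_pos.ne'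
  rw [hc]
  push_cast
  field_simp

end helpers

/-- Let `L` be a number field, Galois over `ℚ` with Galois group `G`, `τ` a
complex embedding of `L` with induced complex conjugation `c₀ ∈ G`.  Let `E` be a field of
characteristic zero and `M` a finite-dimensional `E`-linear representation of `G` containing
no copy of the trivial representation (i.e. `M^G = 0`).  Then
`dim_E Hom_{E[G]}(M, 𝓞_L^× ⊗_ℤ E) = dim_E M^{⟨c₀⟩}`. -/
theorem stark_units_rank
    (L : Type*) [Field L] [NumberField L] [IsGalois ℚ L]
    (τ : L →+* ℂ) (c₀ : L ≃ₐ[ℚ] L)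
    (hc₀ : ∀ x : L, τ (c₀ x) = (starRingEnd ℂ) (τ x))
    (E : Type*) [Field E] [CharZero E]
    (M : Type*) [AddCommGroup M] [Module E M] [FiniteDimensional E M]
    (ρ : Representation E (L ≃ₐ[ℚ] L) M)
    (htriv : ∀ m : M, (∀ σ : L ≃ₐ[ℚ] L, ρ σ m = m) → m = 0) :
    Module.finrank E
        (equivariantHoms (fun σ : L ≃ₐ[ℚ] L => ρ σ) (fun σ : L ≃ₐ[ℚ] L => galUnitsTensor L E σ)) =
      Module.finrank E (LinearMap.ker (ρ c₀ - LinearMap.id)) := by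
  classical
  have inst : Invertible (Nat.card (L ≃ₐ[ℚ] L) : E) :=
    invertibleOfNonzero (by exact_mod_cast Nat.card_pos.ne')
  rw [aux_equivariant]
  have h1 := Representation.card_inv_mul_sum_char_eq_finrank
    (ρ := Representation.linHom ρ (auxRep L E))
  have hinv : Representation.invariants ρ = ⊥ := by
    rw [eq_bot_iff]
    intro m hm
    exact htriv m hm
  have h2 := Representation.card_inv_mul_sum_char_eq_finrank (ρ := ρ)
  rw [hinv, finrank_bot, Nat.cast_zero] at h2
  have h3 := aux_average ρ (InfinitePlace.mk τ) (fun w' =>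
    InfinitePlace.exists_smul_eq_of_comap_eq (k := ℚ) (Subsingleton.elim _ _))
  have hchar : ∀ σ, (auxRep L E).character σ =
      (∑ v : InfinitePlace L, if σ⁻¹ • v = v then 1 else 0) - 1 := by
    intro σ
    rw [← aux_trace_E L E σ, add_sub_cancel_right]
    rfl
  simp only [Representation.char_linHom, hchar, mul_sub, mul_one, Finset.sum_sub_distrib] at h1
  have h4 : ∑ g : L ≃ₐ[ℚ] L, ρ.character g⁻¹ = ∑ g, ρ.character g :=
    Equiv.sum_comp (Equiv.inv _) (fun g => ρ.character g)
  rw [h4, h2, h3, sub_zero] at h1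
  have h5 := Nat.cast_injective h1
  rw [← h5]
  have hconj : ComplexEmbedding.IsConj τ c₀ := by
    ext x
    exact (hc₀ x).symm
  have hst : ∀ g, g ∈ MulAction.stabilizer (L ≃ₐ[ℚ] L) (InfinitePlace.mk τ) ↔ g = 1 ∨ g = c₀ := by
    intro g
    rw [← SetLike.mem_coe, hconj.coe_stabilizer_mk]
    simp
  suffices hsub : Representation.invariants
      (ρ.comp (MulAction.stabilizer (L ≃ₐ[ℚ] L) (InfinitePlace.mk τ)).subtype) =
      LinearMap.ker (ρ c₀ - LinearMap.id) by rw [hsub]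
  ext m
  rw [LinearMap.mem_ker, LinearMap.sub_apply, sub_eq_zero, LinearMap.id_apply]
  constructor
  · intro h
    exact h ⟨c₀, (hst _).mpr (Or.inr rfl)⟩
  · rintro h ⟨g, hg⟩
    change ρ g m = m
    rcases (hst g).mp hg with rfl | rfl
    · simp
    · exact h
end

section
/- Let F be a totally real number field of degree d over ℚ and let L be a number field Galois over ℚ with F ⊆ L. Let E be a field of characteristic 0 and let ρ be a representation of Gal(L/F) on a 2-dimensional E-vector space M. Let End⁰(M) = {T ∈ End_E(M) : tr T = 0} carry the Gal(L/F)-action T ↦ ρ(σ) ∘ T ∘ ρ(σ)⁻¹ (the trace-zero adjoint representation Ad⁰ρ). Assume: (i) (End⁰M)^{Gal(L/F)} = 0 (i.e. Ad⁰ρ contains no copy of the trivial representation, which holds when ρ is absolutely irreducible); and (ii) ρ is odd, i.e. for every embedding τ : L ↪ ℂ, the complex conjugation c_τ induced by τ (which lies in Gal(L/F) since F is totally real) satisfies tr ρ(c_τ) = 0. Then dim_E Hom_{E[Gal(L/F)]}(End⁰(M), 𝓞_L^× ⊗_ℤ E) = d. That is, the Stark unit group U_f of a parallel weight one Hilbert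 modular form has rank d = [F : ℚ]. -/
open NumberField TensorProduct

/-- Conjugation `T ↦ ρ(g) ∘ T ∘ ρ(g)⁻¹` on endomorphisms, as a linear map. -/
def conjEnd {E G M : Type*} [CommRing E] [Group G] [AddCommGroup M] [Module E M]
    (ρ : Representation E G M) (g : G) : (M →ₗ[E] M) →ₗ[E] (M →ₗ[E] M) where
  toFun T := ρ g * T * ρ g⁻¹
  map_add' S T := by simp [mul_add, add_mul]
  map_smul' c T := by simp [mul_smul_comm, smul_mul_assoc]

/-- The trace-zero adjoint representation `Ad⁰ρ`: conjugation by `ρ(g)` restricted to the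
space `End⁰(M)` of trace-zero endomorphisms. -/
noncomputable def adjointAct {E G M : Type*} [CommRing E] [Group G] [AddCommGroup M]
    [Module E M] (ρ : Representation E G M) (g : G) :
    (LinearMap.ker (LinearMap.trace E M)) →ₗ[E] (LinearMap.ker (LinearMap.trace E M)) :=
  (conjEnd ρ g).restrict (by
    intro T hT
    simp only [LinearMap.mem_ker] at hT ⊢
    show LinearMap.trace E M (ρ g * T * ρ g⁻¹) = 0
    rw [LinearMap.trace_mul_comm E (ρ g * T) (ρ g⁻¹), ← mul_assoc, ← map_mul,
      inv_mul_cancel, map_one, one_mul]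
    exact hT)

section StarkAux
open NumberField.Units NumberField.InfinitePlace

/-- full logarithmic embedding -/
noncomputable def starkEllZ (L : Type*) [Field L] [NumberField L] :
    Additive (𝓞 L)ˣ →ₗ[ℤ] (InfinitePlace L → ℝ) :=
  AddMonoidHom.toIntLinearMap
  { toFun := fun x w => (w.mult : ℝ) * Real.log (w ((x.toMul : (𝓞 L)ˣ) : L))
    map_zero' := by ext w; simp
    map_add' := fun x y => by ext w; simp [Real.log_mul, mul_add] }

lemma starkEllZ_apply (L : Type*) [Field L] [NumberField L] (x : Additive (𝓞 L)ˣ)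
    (w : InfinitePlace L) :
    starkEllZ L x w = (w.mult : ℝ) * Real.log (w ((x.toMul : (𝓞 L)ˣ) : L)) := rfl

noncomputable def starkEllR (L : Type*) [Field L] [NumberField L] :
    (ℝ ⊗[ℤ] Additive (𝓞 L)ˣ) →ₗ[ℝ] (InfinitePlace L → ℝ) :=
  LinearMap.liftBaseChange ℝ (starkEllZ L)

lemma starkEllZ_gal (L : Type*) [Field L] [NumberField L] (σ : L ≃ₐ[ℚ] L)
    (x : Additive (𝓞 L)ˣ) :
    starkEllZ L (galUnitsLinear L σ x) =
      LinearMap.funLeft ℝ ℝ (fun w : InfinitePlace L => σ⁻¹ • w) (starkEllZ L x) := by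
  ext w
  rw [LinearMap.funLeft_apply, starkEllZ_apply, starkEllZ_apply]
  have h1 : (σ⁻¹ • w).mult = w.mult := by
    have h : IsReal (σ⁻¹ • w) ↔ IsReal w := isReal_smul_iff
    by_cases hw : IsReal w
    · rw [InfinitePlace.mult, InfinitePlace.mult, if_pos hw, if_pos (h.2 hw)]
    · rw [InfinitePlace.mult, InfinitePlace.mult, if_neg hw, if_neg (fun h' => hw (h.1 h'))]
  have h2 : (((galUnitsLinear L σ x).toMul : (𝓞 L)ˣ) : L) = σ ((x.toMul : (𝓞 L)ˣ) : L) :=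
    algebraMap_galRestrict_apply ℤ σ _
  rw [h1, h2]
  rfl

lemma starkEllR_gal (L : Type*) [Field L] [NumberField L] (σ : L ≃ₐ[ℚ] L)
    (x : ℝ ⊗[ℤ] Additive (𝓞 L)ˣ) :
    starkEllR L (galUnitsTensor L ℝ σ x) =
      LinearMap.funLeft ℝ ℝ (fun w : InfinitePlace L => σ⁻¹ • w) (starkEllR L x) := by
  induction x with
  | zero => simp
  | add x y hx hy => simp only [map_add, hx, hy]
  | tmul r u =>
    simp only [galUnitsTensor, starkEllR, LinearMap.baseChange_tmul,
      LinearMap.liftBaseChange_tmul, starkEllZ_gal, map_smul]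

lemma starkEllR_sum (L : Type*) [Field L] [NumberField L]
    (x : ℝ ⊗[ℤ] Additive (𝓞 L)ˣ) : ∑ w, starkEllR L x w = 0 := by
  induction x with
  | zero => simp
  | add x y hx hy => simp [map_add, Finset.sum_add_distrib, hx, hy]
  | tmul r u =>
    simp only [starkEllR, LinearMap.liftBaseChange_tmul, Pi.smul_apply, smul_eq_mul,
      ← Finset.mul_sum, starkEllZ_apply]
    rw [sum_mult_mul_log, mul_zero]

lemma stark_span (L : Type*) [Field L] [NumberField L] :
    Submodule.span ℝ (Set.range (fun i : Fin (Units.rank L) =>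
      (1 : ℝ) ⊗ₜ[ℤ] (Additive.ofMul (fundSystem L i)))) = ⊤ := by
  rw [eq_top_iff]
  rintro x -
  induction x with
  | zero => exact zero_mem _
  | add x y hx hy => exact add_mem hx hy
  | tmul r u =>
    obtain ⟨⟨ζ, e⟩, h, -⟩ := exist_unique_eq_mul_prod L u.toMul
    have hu : u = Additive.ofMul (ζ : (𝓞 L)ˣ) +
        ∑ i, e i • Additive.ofMul (fundSystem L i) := by
      apply Additive.toMul.injective
      rw [h]
      simp [toMul_sum]
    have hz : r ⊗ₜ[ℤ] Additive.ofMul (ζ : (𝓞 L)ˣ) = 0 := by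
      have hfin : IsOfFinOrder (ζ : (𝓞 L)ˣ) := (CommGroup.mem_torsion _).1 ζ.2
      obtain ⟨n, hn, hpow⟩ := isOfFinOrder_iff_pow_eq_one.1 hfin
      have : r = (n : ℤ) • (r / n) := by
        have : (n : ℝ) ≠ 0 := by positivity
        simp; field_simp
      rw [this, TensorProduct.smul_tmul]
      have h0 : (n : ℤ) • Additive.ofMul (ζ : (𝓞 L)ˣ) = 0 := by
        rw [natCast_zsmul, ← ofMul_pow, hpow]; rfl
      rw [h0, TensorProduct.tmul_zero]
    rw [hu, TensorProduct.tmul_add, hz, zero_add, TensorProduct.tmul_sum]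
    refine Submodule.sum_mem _ fun i _ => ?_
    have : r ⊗ₜ[ℤ] (e i • Additive.ofMul (fundSystem L i)) =
      (e i • r) • ((1:ℝ) ⊗ₜ[ℤ] Additive.ofMul (fundSystem L i)) := by
      rw [TensorProduct.smul_tmul', smul_eq_mul, mul_one]
      exact (TensorProduct.smul_tmul (e i) r (Additive.ofMul (fundSystem L i))).symm
    rw [this]
    exact Submodule.smul_mem _ _ (Submodule.subset_span ⟨i, rfl⟩)

instance stark_fin (L : Type*) [Field L] [NumberField L] (E : Type*) [Field E] :
    FiniteDimensional E (E ⊗[ℤ] Additive (𝓞 L)ˣ) := inferInstance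

lemma starkEllR_surj (L : Type*) [Field L] [NumberField L] :
    Function.Surjective ((LinearMap.funLeft ℝ ℝ Subtype.val :
      (InfinitePlace L → ℝ) →ₗ[ℝ] dirichletUnitTheorem.logSpace L) ∘ₗ starkEllR L) := by
  rw [← LinearMap.range_eq_top, eq_top_iff, ← dirichletUnitTheorem.unitLattice_span_eq_top, Submodule.span_le]
  rintro _ ⟨u, -, rfl⟩
  refine ⟨(1 : ℝ) ⊗ₜ u, ?_⟩
  simp only [starkEllR, LinearMap.comp_apply, LinearMap.liftBaseChange_tmul, one_smul]
  rfl

lemma starkEllR_inj (L : Type*) [Field L] [NumberField L] :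
    Function.Injective (starkEllR L) := by
  classical
  let res : (InfinitePlace L → ℝ) →ₗ[ℝ] dirichletUnitTheorem.logSpace L :=
    LinearMap.funLeft ℝ ℝ Subtype.val
  have hsurj : Function.Surjective (res ∘ₗ starkEllR L) := starkEllR_surj L
  have hle : Module.finrank ℝ (ℝ ⊗[ℤ] Additive (𝓞 L)ˣ) ≤ Units.rank L := by
    have := finrank_range_le_card (R := ℝ) (fun i : Fin (Units.rank L) =>
      (1 : ℝ) ⊗ₜ[ℤ] (Additive.ofMul (fundSystem L i)))
    rw [Set.finrank, stark_span] at this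
    simpa using this
  have heq : Module.finrank ℝ (ℝ ⊗[ℤ] Additive (𝓞 L)ˣ) =
      Module.finrank ℝ (dirichletUnitTheorem.logSpace L) := by
    apply le_antisymm
    · rw [Units.finrank_eq_rank]; exact hle
    · exact LinearMap.finrank_le_finrank_of_surjective hsurj
  have hinj := (LinearMap.injective_iff_surjective_of_finrank_eq_finrank heq).2 hsurj
  exact Function.Injective.of_comp (f := res) (by simpa using hinj)

end StarkAux

section StarkAux2
open NumberField.Units NumberField.InfinitePlace

lemma stark_trace_funLeft {ι : Type*} [Fintype ι] [DecidableEq ι] (f : ι → ι) :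
    LinearMap.trace ℝ (ι → ℝ) (LinearMap.funLeft ℝ ℝ f) =
      ((Finset.univ.filter fun i => f i = i).card : ℝ) := by
  rw [LinearMap.trace_eq_matrix_trace ℝ (Pi.basisFun ℝ ι), Matrix.trace]
  simp only [Matrix.diag_apply, LinearMap.toMatrix_apply, Pi.basisFun_apply, Pi.basisFun_repr,
    LinearMap.funLeft_apply, Pi.single_apply]
  simp

open Classical in
lemma stark_trace_real (L : Type*) [Field L] [NumberField L] (σ : L ≃ₐ[ℚ] L) :
    LinearMap.trace ℝ _ (galUnitsTensor L ℝ σ) =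
      ((Finset.univ.filter fun w : InfinitePlace L => σ • w = w).card : ℝ) - 1 := by
  let P := InfinitePlace L
  let V := ℝ ⊗[ℤ] Additive (𝓞 L)ˣ
  let c : ℝ →ₗ[ℝ] (P → ℝ) := LinearMap.pi fun _ => LinearMap.id
  let Φ : (V × ℝ) →ₗ[ℝ] (P → ℝ) := (starkEllR L).coprod c
  have hΦ : ∀ x r w, Φ (x, r) w = starkEllR L x w + r := fun x r w => rfl
  have hcard : (Fintype.card P : ℝ) ≠ 0 := by
    have : 0 < Fintype.card P := Fintype.card_pos
    positivity
  have hsum : ∀ x r, ∑ w, Φ (x, r) w = Fintype.card P * r := by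
    intro x r
    simp only [hΦ, Finset.sum_add_distrib, Finset.sum_const, nsmul_eq_mul]
    have := starkEllR_sum L x
    change ∑ w : P, starkEllR L x w = 0 at this
    rw [this, zero_add]
    rfl
  have hinj : Function.Injective Φ := by
    rw [← LinearMap.ker_eq_bot, LinearMap.ker_eq_bot']
    rintro ⟨x, r⟩ h
    have hr : r = 0 := by
      have := hsum x r
      rw [h] at this
      simpa [hcard, eq_comm] using this
    subst hr
    have : starkEllR L x = 0 := by
      ext w
      have := hΦ x 0 w
      rw [h] at this
      simpa [eq_comm] using this
    rw [(map_eq_zero_iff _ (starkEllR_inj L)).1 this]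
    rfl
  have hdim : Module.finrank ℝ (V × ℝ) = Module.finrank ℝ (P → ℝ) := by
    apply le_antisymm (LinearMap.finrank_le_finrank_of_injective hinj)
    rw [Module.finrank_prod, Module.finrank_self, Module.finrank_fintype_fun_eq_card]
    let res : (InfinitePlace L → ℝ) →ₗ[ℝ] dirichletUnitTheorem.logSpace L :=
      LinearMap.funLeft ℝ ℝ Subtype.val
    have hsurj := starkEllR_surj L
    have := LinearMap.finrank_le_finrank_of_surjective hsurj
    rw [Units.finrank_eq_rank, Units.rank] at this
    exact Nat.le_add_of_sub_le this
  let e := LinearEquiv.ofInjectiveOfFinrankEq Φ hinj hdim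
  have hconj : e.conj (LinearMap.prodMap (galUnitsTensor L ℝ σ) LinearMap.id) =
      LinearMap.funLeft ℝ ℝ (fun w : InfinitePlace L => σ⁻¹ • w) := by
    apply LinearMap.ext
    intro y
    obtain ⟨⟨x, r⟩, rfl⟩ := e.surjective y
    rw [LinearEquiv.conj_apply_apply, e.symm_apply_apply]
    change Φ _ = LinearMap.funLeft ℝ ℝ _ (Φ _)
    ext w
    rw [LinearMap.prodMap_apply, LinearMap.funLeft_apply, hΦ, hΦ, starkEllR_gal]
    rfl
  have ht := LinearMap.trace_conj' (LinearMap.prodMap (galUnitsTensor L ℝ σ)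
    (LinearMap.id : ℝ →ₗ[ℝ] ℝ)) e
  rw [hconj, LinearMap.trace_prodMap', stark_trace_funLeft, LinearMap.trace_id,
    Module.finrank_self] at ht
  rw [eq_sub_iff_add_eq, ← Nat.cast_one, ← ht]
  congr 2
  ext w
  simp only [Finset.mem_filter, Finset.mem_univ, true_and]
  exact ⟨fun h => (inv_smul_eq_iff.1 h).symm, fun h => inv_smul_eq_iff.2 h.symm⟩

lemma stark_trace_rat (L : Type*) [Field L] [NumberField L] (E : Type*) [Field E] [CharZero E]
    (σ : L ≃ₐ[ℚ] L) :
    LinearMap.trace E _ (galUnitsTensor L E σ) =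
      algebraMap ℚ E (LinearMap.trace ℚ _ (galUnitsTensor L ℚ σ)) := by
  rw [← LinearMap.trace_baseChange (galUnitsTensor L ℚ σ) E,
    ← LinearMap.trace_conj' _ (TensorProduct.AlgebraTensorModule.cancelBaseChange ℤ ℚ E E
      (Additive (𝓞 L)ˣ))]
  congr 1
  apply LinearMap.ext
  intro x
  induction x with
  | zero => simp
  | add x y hx hy => simp only [map_add, hx, hy]
  | tmul r u =>
    rw [LinearEquiv.conj_apply_apply]
    simp [galUnitsTensor]

open Classical in
lemma stark_trace (L : Type*) [Field L] [NumberField L] (E : Type*) [Field E] [CharZero E]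
    (σ : L ≃ₐ[ℚ] L) :
    LinearMap.trace E _ (galUnitsTensor L E σ) =
      ((Finset.univ.filter fun w : InfinitePlace L => σ • w = w).card : E) - 1 := by
  have h := stark_trace_real L σ
  rw [stark_trace_rat] at h
  have h2 : LinearMap.trace ℚ _ (galUnitsTensor L ℚ σ) =
      ((Finset.univ.filter fun w : InfinitePlace L => σ • w = w).card : ℚ) - 1 := by
    apply (algebraMap ℚ ℝ).injective
    rw [h]; simp
  rw [stark_trace_rat, h2]; simp

end StarkAux2

section StarkAux3

variable {E G M : Type*} [Field E] [Group G] [AddCommGroup M] [Module E M]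

noncomputable def starkAd (ρ : Representation E G M) :
    Representation E G (LinearMap.ker (LinearMap.trace E M)) where
  toFun := adjointAct ρ
  map_one' := by
    apply LinearMap.ext; intro T; apply Subtype.ext
    change ρ 1 * T.1 * ρ 1⁻¹ = T.1
    simp
  map_mul' g h := by
    apply LinearMap.ext; intro T; apply Subtype.ext
    change ρ (g * h) * T.1 * ρ (g * h)⁻¹ = ρ g * (ρ h * T.1 * ρ h⁻¹) * ρ g⁻¹
    simp [mul_assoc]

lemma starkAd_char [CharZero E] [FiniteDimensional E M] (hM : Module.finrank E M = 2)
    (ρ : Representation E G M) (g : G) :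
    (starkAd ρ).character g =
      LinearMap.trace E M (ρ g⁻¹) * LinearMap.trace E M (ρ g) - 1 := by
  have h1 : LinearMap.trace E _ (conjEnd ρ g) =
      LinearMap.trace E M (ρ g⁻¹) * LinearMap.trace E M (ρ g) := by
    have := Representation.char_linHom ρ ρ g
    rw [Representation.character, Representation.character, Representation.character] at this
    rw [← this]
    congr 1
  let c : E →ₗ[E] (M →ₗ[E] M) := LinearMap.toSpanSingleton E _ LinearMap.id
  let Φ : (LinearMap.ker (LinearMap.trace E M) × E) →ₗ[E] (M →ₗ[E] M) :=
    (Submodule.subtype _).coprod c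
  have hΦ : ∀ T r, Φ (T, r) = T.1 + r • LinearMap.id := fun T r => rfl
  have htr : ∀ T r, LinearMap.trace E M (Φ (T, r)) = r * 2 := by
    intro T r
    rw [hΦ, map_add, T.2, map_smul, LinearMap.trace_id, hM]
    simp
  have hbij : Function.Bijective Φ := by
    constructor
    · rw [← LinearMap.ker_eq_bot, LinearMap.ker_eq_bot']
      rintro ⟨T, r⟩ h
      have hr : r = 0 := by
        have := htr T r
        rw [h] at this
        simpa [eq_comm] using this
      subst hr
      have : T = 0 := by
        apply Subtype.ext
        have := hΦ T 0
        rw [h] at this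
        simpa [eq_comm] using this
      rw [this]; rfl
    · intro S
      refine ⟨(⟨S - (LinearMap.trace E M S / 2) • LinearMap.id, ?_⟩,
        LinearMap.trace E M S / 2), ?_⟩
      · rw [LinearMap.mem_ker, map_sub, map_smul, LinearMap.trace_id, hM]
        simp
      · rw [hΦ]; simp
  let e := LinearEquiv.ofBijective Φ hbij
  have hconj : e.conj (LinearMap.prodMap (adjointAct ρ g) LinearMap.id) = conjEnd ρ g := by
    apply LinearMap.ext
    intro y
    obtain ⟨⟨T, r⟩, rfl⟩ := e.surjective y
    rw [LinearEquiv.conj_apply_apply, e.symm_apply_apply]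
    change Φ _ = conjEnd ρ g (Φ _)
    rw [LinearMap.prodMap_apply, hΦ, hΦ, map_add, map_smul]
    congr 1
    change r • (1 : Module.End E M) = r • (ρ g * 1 * ρ g⁻¹)
    rw [mul_one, ← map_mul]; simp
  have ht := LinearMap.trace_conj' (LinearMap.prodMap (adjointAct ρ g)
    (LinearMap.id : E →ₗ[E] E)) e
  rw [hconj, LinearMap.trace_prodMap', h1, LinearMap.trace_id, Module.finrank_self] at ht
  rw [ht]
  simp [Representation.character, starkAd]

noncomputable def starkUnitRep (F L E : Type*) [Field F] [NumberField F] [Field L] [NumberField L]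
    [Algebra F L] [IsScalarTower ℚ F L] [Field E] :
    Representation E (L ≃ₐ[F] L) (E ⊗[ℤ] Additive (𝓞 L)ˣ) where
  toFun g := galUnitsTensor L E (g.restrictScalars ℚ)
  map_one' := by
    have : galUnitsLinear L ((1 : L ≃ₐ[F] L).restrictScalars ℚ) = LinearMap.id := by
      apply LinearMap.ext; intro x
      apply Additive.toMul.injective; apply Units.ext; apply RingOfIntegers.ext
      exact algebraMap_galRestrict_apply ℤ _ _
    rw [galUnitsTensor, this, LinearMap.baseChange_id]; rfl
  map_mul' g h := by
    have : galUnitsLinear L ((g * h).restrictScalars ℚ) =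
        galUnitsLinear L (g.restrictScalars ℚ) ∘ₗ galUnitsLinear L (h.restrictScalars ℚ) := by
      apply LinearMap.ext; intro x
      apply Additive.toMul.injective; apply Units.ext; apply RingOfIntegers.ext
      refine (algebraMap_galRestrict_apply ℤ _ _).trans ?_
      refine Eq.trans ?_ (algebraMap_galRestrict_apply ℤ _ _).symm
      exact congrArg g (algebraMap_galRestrict_apply ℤ (h.restrictScalars ℚ) _).symm
    rw [galUnitsTensor, this, LinearMap.baseChange_comp]; rfl

lemma stark_linHom_invariants {V W : Type*} [AddCommGroup V] [Module E V] [AddCommGroup W]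
    [Module E W] (ρ : Representation E G V) (ν : Representation E G W) :
    (Representation.linHom ρ ν).invariants = equivariantHoms (fun g => ρ g) (fun g => ν g) := by
  ext f
  constructor
  · intro h g v
    have h2 := LinearMap.congr_fun (h g) (ρ g v)
    rw [Representation.linHom_apply] at h2
    simpa using h2.symm
  · intro h g
    rw [Representation.linHom_apply]
    ext v
    have := h g (ρ g⁻¹ v)
    simpa using this.symm

end StarkAux3

/-- Let `F` be a totally real number field of degree `d` and `L ⊇ F` a
number field Galois over `ℚ`.  Let `E` be a field of characteristic zero and `ρ` a
representation of `Gal(L/F)` on a `2`-dimensional `E`-vector space `M` whose trace-zero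
adjoint representation `Ad⁰ρ` on `End⁰(M)` contains no copy of the trivial representation,
and which is odd (every complex conjugation of `L`, which lies in `Gal(L/F)` as `F` is
totally real, has trace-zero image).  Then
`dim_E Hom_{E[Gal(L/F)]}(End⁰(M), 𝓞_L^× ⊗_ℤ E) = d`: the Stark unit group of a parallel
weight one Hilbert modular form has rank `d = [F : ℚ]`. -/
theorem stark_units_rank_eq_degree
    (F : Type*) [Field F] [NumberField F]
    (L : Type*) [Field L] [NumberField L]
    [Algebra F L] [IsScalarTower ℚ F L] [IsGalois ℚ L]
    (hF : ∀ φ : F →+* ℂ, ∀ x : F, (φ x).im = 0)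
    (E : Type*) [Field E] [CharZero E]
    (M : Type*) [AddCommGroup M] [Module E M] [FiniteDimensional E M]
    (hM : Module.finrank E M = 2)
    (ρ : Representation E (L ≃ₐ[F] L) M)
    (htriv : ∀ T : LinearMap.ker (LinearMap.trace E M),
      (∀ g : L ≃ₐ[F] L, adjointAct ρ g T = T) → T = 0)
    (hodd : ∀ (τ : L →+* ℂ) (c : L ≃ₐ[F] L),
      (∀ x : L, τ (c x) = (starRingEnd ℂ) (τ x)) →
      LinearMap.trace E M (ρ c) = 0) :
    Module.finrank E
        (equivariantHoms (fun g : L ≃ₐ[F] L => adjointAct ρ g)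
          (fun g : L ≃ₐ[F] L => galUnitsTensor L E (g.restrictScalars ℚ))) =
      Module.finrank ℚ F := by
  classical
  haveI : IsGalois F L := IsGalois.tower_top_of_isGalois ℚ F L
  haveI : FiniteDimensional F L := Module.Finite.of_restrictScalars_finite ℚ F L
  have h2 : (2 : E) ≠ 0 := two_ne_zero
  -- `L` is totally complex
  haveI hC : IsTotallyComplex L := by
    refine ⟨fun w => ?_⟩
    rw [← InfinitePlace.not_isReal_iff_isComplex]
    intro hw
    have h := hodd w.embedding 1 (fun x => by
      have := RingHom.congr_fun
        (ComplexEmbedding.isReal_iff.1 (InfinitePlace.isReal_iff.1 hw)) x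
      exact this.symm)
    rw [map_one, LinearMap.trace_one, hM] at h
    exact h2 (by exact_mod_cast h)
  have hconj : ∀ w : InfinitePlace L, ∃ c : L ≃ₐ[F] L,
      ComplexEmbedding.IsConj w.embedding c := by
    intro w
    apply InfinitePlace.exists_isConj_of_isRamified
    rw [InfinitePlace.isRamified_iff]
    refine ⟨hC.isComplex _, ?_⟩
    rw [InfinitePlace.comap_mk, InfinitePlace.isReal_mk_iff, ComplexEmbedding.isReal_iff]
    ext x
    exact Complex.conj_eq_iff_im.2 (hF _ x)
  have hcardE : (Nat.card (L ≃ₐ[F] L) : E) ≠ 0 := by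
    have : Nat.card (L ≃ₐ[F] L) ≠ 0 := Nat.card_pos.ne'
    exact_mod_cast this
  letI : Invertible (Nat.card (L ≃ₐ[F] L) : E) := invertibleOfNonzero hcardE
  have hchar1 : (starkAd ρ).character 1 = 3 := by
    rw [starkAd_char hM, inv_one, map_one, LinearMap.trace_one, hM]; norm_num
  -- invariants
  have hinv : ∑ g : L ≃ₐ[F] L, (starkAd ρ).character g⁻¹ = 0 := by
    have h := Representation.card_inv_mul_sum_char_eq_finrank (starkAd ρ)
    have hb : (starkAd ρ).invariants = ⊥ := by
      rw [eq_bot_iff]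
      intro T hT
      exact htriv T hT
    rw [hb, finrank_bot, Nat.cast_zero, mul_eq_zero] at h
    rw [← h.resolve_left (inv_ne_zero hcardE)]
    exact Equiv.sum_comp (Equiv.inv _) (starkAd ρ).character
  have hstab : ∀ w : InfinitePlace L,
      ∑ g : L ≃ₐ[F] L, (if g • w = w then (starkAd ρ).character g⁻¹ else 0) = 2 := by
    intro w
    obtain ⟨c, hc⟩ := hconj w
    have hc0 : LinearMap.trace E M (ρ c) = 0 :=
      hodd w.embedding c (fun x => (RingHom.congr_fun hc x).symm)
    have hc1 : c ≠ 1 := by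
      rintro rfl
      rw [map_one, LinearMap.trace_one, hM] at hc0
      exact h2 (by exact_mod_cast hc0)
    have hf : (Finset.univ.filter fun g : L ≃ₐ[F] L => g • w = w) = {1, c} := by
      ext g
      have h := Set.ext_iff.1 hc.coe_stabilizer_mk g
      rw [InfinitePlace.mk_embedding] at h
      simpa using h
    rw [← Finset.sum_filter, hf, Finset.sum_pair hc1.symm, inv_one, hchar1,
      starkAd_char hM, inv_inv, hc0]
    norm_num
  have hsum : ∑ g : L ≃ₐ[F] L, (starkUnitRep F L E).character g * (starkAd ρ).character g⁻¹ =
      (Nat.card (L ≃ₐ[F] L) : E) * Module.finrank ℚ F := by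
    have hu : ∀ g : L ≃ₐ[F] L, (starkUnitRep F L E).character g =
        ((Finset.univ.filter fun w : InfinitePlace L => g • w = w).card : E) - 1 := fun g =>
      stark_trace L E (g.restrictScalars ℚ)
    simp only [hu, sub_mul, one_mul, Finset.sum_sub_distrib, hinv, sub_zero]
    have : ∀ g : L ≃ₐ[F] L,
        ((Finset.univ.filter fun w : InfinitePlace L => g • w = w).card : E) *
          (starkAd ρ).character g⁻¹ =
        ∑ w : InfinitePlace L, (if g • w = w then (starkAd ρ).character g⁻¹ else 0) := by
      intro g
      rw [← Finset.sum_filter, Finset.sum_const, nsmul_eq_mul]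
    simp only [this]
    rw [Finset.sum_comm]
    simp only [hstab, Finset.sum_const, nsmul_eq_mul, Finset.card_univ]
    have h3 : Module.finrank ℚ L = 2 * Fintype.card (InfinitePlace L) := by
      rw [IsTotallyComplex.finrank, InfinitePlace.card_eq_nrRealPlaces_add_nrComplexPlaces,
        IsTotallyComplex.nrRealPlaces_eq_zero, zero_add]
    have h4 : Fintype.card (InfinitePlace L) * 2 =
        Nat.card (L ≃ₐ[F] L) * Module.finrank ℚ F := by
      rw [IsGalois.card_aut_eq_finrank, mul_comm, ← h3, mul_comm,
        Module.finrank_mul_finrank]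
    exact_mod_cast h4
  have hmain := Representation.card_inv_mul_sum_char_mul_char_eq_finrank
    (starkAd ρ) (starkUnitRep F L E)
  rw [hsum, inv_mul_cancel_left₀ hcardE,
    ← (Representation.invariantsEquivIntertwiningMap _ _).finrank_eq,
    stark_linHom_invariants] at hmain
  exact (Nat.cast_injective hmain).symm
end
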